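/- Let V be a real vector space with a symmetric bilinear form ⟨·,·⟩, let a₂, a₃ ∈ V, write hᵢⱼ := ⟨aᵢ, aⱼ⟩, and suppose h₃₃ > 0 and h₂₂ < 0. Set q := h₃₃ • a₂ − h₂₃ • a₃. Then −⟨a₂, q⟩ / √(⟨q, q⟩·⟨a₂, a₂⟩) = √((h₂₂h₃₃ − h₂₃²)/(h₂₂h₃₃)). -/

import Mathlib

theorem cosh_dist_Q_A2 (V : Type*) [AddCommGroup V] [Module ℝ V]
    (B : LinearMap.BilinForm ℝ V) (hB : ∀ x y : V, B x y = B y x)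
    (a₂ a₃ : V)
    (h33 : 0 < B a₃ a₃) (h22 : B a₂ a₂ < 0)
    (q : V) (hq : q = B a₃ a₃ • a₂ - B a₂ a₃ • a₃) :
    -(B a₂ q) / Real.sqrt (B q q * B a₂ a₂) =
      Real.sqrt ((B a₂ a₂ * B a₃ a₃ - (B a₂ a₃) ^ 2) / (B a₂ a₂ * B a₃ a₃)) := by
  have h2q : B a₂ q = B a₂ a₂ * B a₃ a₃ - (B a₂ a₃) ^ 2 := by
    simp only [hq, map_sub, map_smul, smul_eq_mul]
    ring
  have hqq : B q q = B a₃ a₃ * (B a₂ a₂ * B a₃ a₃ - (B a₂ a₃) ^ 2) := by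
    simp only [hq, map_sub, map_smul, smul_eq_mul, LinearMap.sub_apply, LinearMap.smul_apply,
      hB a₃ a₂]
    ring
  have hneg : B a₂ a₂ * B a₃ a₃ - (B a₂ a₃) ^ 2 < 0 := by
    nlinarith [mul_neg_of_neg_of_pos h22 h33, sq_nonneg (B a₂ a₃)]
  rw [h2q, hqq]
  generalize B a₂ a₂ * B a₃ a₃ - (B a₂ a₃) ^ 2 = D at hneg ⊢
  rw [← Real.sqrt_sq (neg_pos.mpr hneg).le, ← Real.sqrt_div (sq_nonneg _)]
  congr 1
  have := h33.ne'
  have := h22.ne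
  have := hneg.ne
  field_simp
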